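/- The group V_n' generated by α' and β' in the unitary group U_n is a finite group of order n³. -/

import Mathlib

/-!
The generators satisfy `β'α' = ζ α'β'`, so the scalar `ζ` is a commutator of the generators and, since
`α'`, `β'` and `ζ` all have `n`-th power `1`, every element of `V_n'` can be written as
`ζ ^ i α' ^ j β' ^ k` with `0 ≤ i, j, k < n` (`exists_normalForm`). The entries of this matrix
determine the exponents: the nonzero entry of column `0` is in row `j`, and the nonzero entries of
columns `0` and `1` are `ζ ^ (i + k)` and `ζ ^ (i + 2k)`, where `ζ` is a primitive `n`-th root of
unity (`normalForm_injective`). Hence there are exactly `n ^ 3` elements.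
-/

open Matrix Complex

/-- `ζ = exp(2πi/n)`. -/
noncomputable def zetaC (n : ℕ) : ℂ := Complex.exp (2 * Real.pi * Complex.I / n)

/-- The cyclic permutation matrix `α'`, with `α'_{ij} = 1` iff `i ≡ j + 1 (mod n)`. -/
noncomputable def alphaM (n : ℕ) : Matrix (Fin n) (Fin n) ℂ :=
  fun i j => if (i : ℕ) = ((j : ℕ) + 1) % n then 1 else 0

/-- The diagonal matrix `β' = diag(ζ, ζ², …, ζ^{n−1}, 1)`. -/
noncomputable def betaM (n : ℕ) : Matrix (Fin n) (Fin n) ℂ :=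
  Matrix.diagonal fun i => zetaC n ^ ((i : ℕ) + 1)

/-- `α'` as an element of the unitary group. -/
noncomputable def aU (n : ℕ) (hA : alphaM n ∈ Matrix.unitaryGroup (Fin n) ℂ) :
    Matrix.unitaryGroup (Fin n) ℂ := ⟨alphaM n, hA⟩

/-- `β'` as an element of the unitary group. -/
noncomputable def bU (n : ℕ) (hB : betaM n ∈ Matrix.unitaryGroup (Fin n) ℂ) :
    Matrix.unitaryGroup (Fin n) ℂ := ⟨betaM n, hB⟩

/-- The scalar matrix `ζ·I` as an element of the unitary group. -/
noncomputable def sU (n : ℕ)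
    (hS : zetaC n • (1 : Matrix (Fin n) (Fin n) ℂ) ∈ Matrix.unitaryGroup (Fin n) ℂ) :
    Matrix.unitaryGroup (Fin n) ℂ := ⟨zetaC n • (1 : Matrix (Fin n) (Fin n) ℂ), hS⟩

/-- `V_n'`, the subgroup of `U_n` generated by `α'` and `β'`. -/
noncomputable def Vgrp (n : ℕ) (hA : alphaM n ∈ Matrix.unitaryGroup (Fin n) ℂ)
    (hB : betaM n ∈ Matrix.unitaryGroup (Fin n) ℂ) :
    Subgroup (Matrix.unitaryGroup (Fin n) ℂ) :=
  Subgroup.closure {aU n hA, bU n hB}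

/-- `W_n`, the subgroup of `U_n` generated by `β'` and the scalar matrix `ζ·I`. -/
noncomputable def Wgrp (n : ℕ) (hB : betaM n ∈ Matrix.unitaryGroup (Fin n) ℂ)
    (hS : zetaC n • (1 : Matrix (Fin n) (Fin n) ℂ) ∈ Matrix.unitaryGroup (Fin n) ℂ) :
    Subgroup (Matrix.unitaryGroup (Fin n) ℂ) :=
  Subgroup.closure {bU n hB, sU n hS}

/-- If `b a = z a b` with `z` commuting with `a` and `b`, and `a`, `b`, `z` have `n`-th power `1`, then
every element of `⟨a, b⟩` has the normal form `z ^ i * a ^ j * b ^ k` with exponents below `n`. -/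
lemma exists_normalForm {G : Type*} [Group G] {a b z : G} {n : ℕ} (hn : 0 < n)
    (hza : Commute z a) (hzb : Commute z b) (hba : b * a = z * a * b)
    (ha : a ^ n = 1) (hb : b ^ n = 1) (hz : z ^ n = 1) {g : G}
    (hg : g ∈ Subgroup.closure {a, b}) :
    ∃ i j k : Fin n, g = z ^ (i : ℕ) * a ^ (j : ℕ) * b ^ (k : ℕ) := by
  have reduce : ∀ {x : G}, x ^ n = 1 → ∀ m : ℤ, ∃ i : Fin n, x ^ m = x ^ (i : ℕ) := by
    intro x hx m
    have h0 : 0 ≤ m % n := Int.emod_nonneg _ (by omega)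
    have h1 : m % n < n := Int.emod_lt_of_pos _ (by omega)
    refine ⟨⟨(m % n).toNat, by omega⟩, ?_⟩
    have hx' : x ^ (n : ℤ) = 1 := by rw [zpow_natCast, hx]
    rw [← zpow_natCast, Int.toNat_of_nonneg h0]
    conv_lhs => rw [← Int.emod_add_mul_ediv m n, _root_.zpow_add, _root_.zpow_mul,
      hx', _root_.one_zpow, mul_one]
  have hab : ∀ k : ℤ, b ^ k * a = z ^ k * a * b ^ k := by
    have h1 : a⁻¹ * b * a = z * b := by
      rw [mul_assoc, hba, hza.eq]; group
    intro k
    have h2 : a⁻¹ * b ^ k * a = z ^ k * b ^ k := by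
      rw [← hzb.mul_zpow, ← h1]
      simpa using (conj_zpow (i := k) (a := a⁻¹) (b := b)).symm
    have h3 : b ^ k * a = a * (a⁻¹ * b ^ k * a) := by group
    rw [h3, h2, ← mul_assoc, (hza.zpow_left k).eq]
  have hab' : ∀ k : ℤ, b ^ k * a⁻¹ = z ^ (-k) * a⁻¹ * b ^ k := by
    intro k
    have h := hab k
    have hc := hza.zpow_left k
    rw [mul_inv_eq_iff_eq_mul, mul_assoc, h, _root_.zpow_neg, hc.eq]
    group
  suffices h : ∃ i j k : ℤ, g = z ^ i * a ^ j * b ^ k by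
    obtain ⟨i, j, k, rfl⟩ := h
    obtain ⟨i', hi⟩ := reduce hz i
    obtain ⟨j', hj⟩ := reduce ha j
    obtain ⟨k', hk⟩ := reduce hb k
    exact ⟨i', j', k', by rw [hi, hj, hk]⟩
  induction hg using Subgroup.closure_induction_right with
  | one => exact ⟨0, 0, 0, by simp⟩
  | mul_right x _ y hy ih =>
    obtain ⟨i, j, k, rfl⟩ := ih
    rcases hy with rfl | rfl
    · refine ⟨i + k, j + 1, k, ?_⟩
      rw [mul_assoc, hab, _root_.zpow_add, _root_.zpow_add, zpow_one]
      have := (hza.zpow_zpow k j).eq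
      simp only [mul_assoc]
      rw [← mul_assoc (_ ^ j) (z ^ k), ← this]
      simp only [mul_assoc]
    · exact ⟨i, j, k + 1, by rw [_root_.zpow_add, zpow_one, mul_assoc, mul_assoc]⟩
  | mul_inv_cancel x _ y hy ih =>
    obtain ⟨i, j, k, rfl⟩ := ih
    rcases hy with rfl | rfl
    · refine ⟨i + -k, j + -1, k, ?_⟩
      rw [mul_assoc, hab', _root_.zpow_add, _root_.zpow_add, _root_.zpow_neg_one]
      have := (hza.zpow_zpow (-k) j).eq
      simp only [mul_assoc]
      rw [← mul_assoc (_ ^ j) (z ^ (-k)), ← this]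
      simp only [mul_assoc]
    · exact ⟨i, j, k + -1, by rw [_root_.zpow_add, _root_.zpow_neg_one, mul_assoc, mul_assoc]⟩

lemma zetaC_isPrimitiveRoot {n : ℕ} (hn : 1 < n) : IsPrimitiveRoot (zetaC n) n :=
  Complex.isPrimitiveRoot_exp n (by omega)

lemma alphaM_pow_apply {n : ℕ} (m : ℕ) (i j : Fin n) :
    (alphaM n ^ m) i j = if (i : ℕ) = ((j : ℕ) + m) % n then 1 else 0 := by
  induction m generalizing i j with
  | zero => simp [Matrix.one_apply, Nat.mod_eq_of_lt j.2, Fin.ext_iff]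
  | succ m ih =>
    have hn : 0 < n := i.pos
    rw [pow_succ, Matrix.mul_apply,
      Finset.sum_eq_single (⟨((j : ℕ) + 1) % n, Nat.mod_lt _ hn⟩ : Fin n)]
    · rw [ih]
      simp only [alphaM, if_true, mul_one, Nat.mod_add_mod]
      rw [show (j : ℕ) + 1 + m = j + (m + 1) by ring]
    · intro k _ hk
      rw [alphaM, if_neg (fun h => hk (Fin.ext h)), mul_zero]
    · simp

lemma betaM_pow {n : ℕ} (m : ℕ) :
    betaM n ^ m = Matrix.diagonal fun i : Fin n => zetaC n ^ (((i : ℕ) + 1) * m) := by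
  rw [betaM, Matrix.diagonal_pow]
  congr 1
  ext i
  simp [pow_mul]

/-- The entries of `ζ ^ i α' ^ j β' ^ k`, from which the exponents mod `n` can be read off. -/
lemma normalForm_apply {n : ℕ} (i j k : ℕ) (r s : Fin n) :
    ((zetaC n • (1 : Matrix (Fin n) (Fin n) ℂ)) ^ i * alphaM n ^ j * betaM n ^ k) r s =
      if (r : ℕ) = ((s : ℕ) + j) % n then zetaC n ^ (i + ((s : ℕ) + 1) * k) else 0 := by
  rw [betaM_pow, Matrix.mul_diagonal, smul_pow, one_pow, smul_mul_assoc, one_mul,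
    Matrix.smul_apply, alphaM_pow_apply, pow_add]
  split_ifs <;> simp

lemma normalForm_injective {n : ℕ} (hn : 1 < n) {i j k i' j' k' : Fin n}
    (h : (zetaC n • (1 : Matrix (Fin n) (Fin n) ℂ)) ^ (i : ℕ) * alphaM n ^ (j : ℕ) *
        betaM n ^ (k : ℕ) =
      (zetaC n • (1 : Matrix (Fin n) (Fin n) ℂ)) ^ (i' : ℕ) * alphaM n ^ (j' : ℕ) *
        betaM n ^ (k' : ℕ)) : i = i' ∧ j = j' ∧ k = k' := by
  have hz := zetaC_isPrimitiveRoot hn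
  have hz0 : zetaC n ≠ 0 := hz.ne_zero (by omega)
  -- Column `0` has its only nonzero entry in row `j`.
  have h0 := congrFun (congrFun h j) ⟨0, by omega⟩
  rw [normalForm_apply, normalForm_apply] at h0
  simp only [zero_add, Nat.mod_eq_of_lt j.2, Nat.mod_eq_of_lt j'.2, if_true, one_mul] at h0
  have hj : j = j' := by
    by_contra hne
    rw [if_neg (fun e => hne (Fin.ext e))] at h0
    exact pow_ne_zero _ hz0 h0
  subst hj
  rw [if_pos rfl] at h0
  -- Comparing columns `0` and `1` isolates `ζ ^ k`.
  have h1 := congrFun (congrFun h ⟨(1 + j) % n, Nat.mod_lt _ (by omega)⟩) ⟨1, hn⟩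
  rw [normalForm_apply, normalForm_apply] at h1
  simp only [if_true] at h1
  have hk : zetaC n ^ (k : ℕ) = zetaC n ^ (k' : ℕ) := by
    have e1 : (i : ℕ) + (1 + 1) * k = i + k + k := by ring
    have e2 : (i' : ℕ) + (1 + 1) * k' = i' + k' + k' := by ring
    rw [e1, e2, pow_add _ ((i : ℕ) + k), pow_add _ ((i' : ℕ) + k'), h0] at h1
    exact mul_left_cancel₀ (pow_ne_zero _ hz0) h1
  rw [pow_add, pow_add, hk] at h0
  exact ⟨Fin.ext (hz.pow_inj i.2 i'.2 (mul_right_cancel₀ (pow_ne_zero _ hz0) h0)), rfl,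
    Fin.ext (hz.pow_inj k.2 k'.2 hk)⟩

lemma smul_one_mem_unitaryGroup {n : ℕ} (hn : 1 < n) :
    zetaC n • (1 : Matrix (Fin n) (Fin n) ℂ) ∈ Matrix.unitaryGroup (Fin n) ℂ := by
  have h : star (zetaC n) * zetaC n = 1 := by
    have := (zetaC_isPrimitiveRoot hn).norm'_eq_one (by omega)
    rw [Complex.star_def, ← Complex.normSq_eq_conj_mul_self, Complex.normSq_eq_norm_sq, this]
    simp
  rw [Matrix.mem_unitaryGroup_iff', star_smul, star_one, smul_mul_smul_comm, h, one_mul, one_smul]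

lemma alphaM_pow_self {n : ℕ} : alphaM n ^ n = 1 := by
  ext i j
  simp [alphaM_pow_apply, Matrix.one_apply, Nat.mod_eq_of_lt j.2, Fin.ext_iff]

lemma betaM_pow_self {n : ℕ} (hn : 1 < n) : betaM n ^ n = 1 := by
  rw [betaM_pow, ← Matrix.diagonal_one]
  congr 1
  ext i
  rw [mul_comm, pow_mul, (zetaC_isPrimitiveRoot hn).pow_eq_one, one_pow]

lemma betaM_mul_alphaM {n : ℕ} (hn : 1 < n) :
    betaM n * alphaM n = zetaC n • (1 : Matrix (Fin n) (Fin n) ℂ) * alphaM n * betaM n := by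
  ext r s
  rw [smul_mul_assoc, one_mul, betaM, Matrix.mul_diagonal, Matrix.diagonal_mul, Matrix.smul_apply,
    alphaM]
  split_ifs with h
  · rw [h, pow_succ, ← pow_eq_pow_mod _ (zetaC_isPrimitiveRoot hn).pow_eq_one, smul_eq_mul]
    ring
  · simp

/-- the group `V_n'` is a finite group of order `n³`. -/
theorem Vgrp_card (n : ℕ) (hn : 1 < n)
    (hA : alphaM n ∈ Matrix.unitaryGroup (Fin n) ℂ)
    (hB : betaM n ∈ Matrix.unitaryGroup (Fin n) ℂ) :
    Finite (Vgrp n hA hB) ∧ Nat.card (Vgrp n hA hB) = n ^ 3 := by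
  have hS := smul_one_mem_unitaryGroup hn
  have hba : bU n hB * aU n hA = sU n hS * aU n hA * bU n hB :=
    Subtype.ext (betaM_mul_alphaM hn)
  have hza : Commute (sU n hS) (aU n hA) := Subtype.ext <| by simp [sU, aU]
  have hzb : Commute (sU n hS) (bU n hB) := Subtype.ext <| by simp [sU, bU]
  have haV : aU n hA ∈ Vgrp n hA hB := Subgroup.subset_closure (by simp)
  have hbV : bU n hB ∈ Vgrp n hA hB := Subgroup.subset_closure (by simp)
  -- The scalar `ζ` is the commutator of `β'` and `α'`.
  have hzV : sU n hS ∈ Vgrp n hA hB := by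
    have : sU n hS = bU n hB * aU n hA * (bU n hB)⁻¹ * (aU n hA)⁻¹ := by rw [hba]; group
    rw [this]
    exact mul_mem (mul_mem (mul_mem hbV haV) (inv_mem hbV)) (inv_mem haV)
  have hz : sU n hS ^ n = 1 := Subtype.ext <| by
    simp [sU, smul_pow, (zetaC_isPrimitiveRoot hn).pow_eq_one]
  let F : Fin n × Fin n × Fin n → Vgrp n hA hB := fun p =>
    ⟨sU n hS ^ (p.1 : ℕ) * aU n hA ^ (p.2.1 : ℕ) * bU n hB ^ (p.2.2 : ℕ),
      mul_mem (mul_mem (pow_mem hzV _) (pow_mem haV _)) (pow_mem hbV _)⟩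
  have hF : Function.Bijective F := by
    constructor
    · rintro ⟨i, j, k⟩ ⟨i', j', k'⟩ h
      obtain ⟨rfl, rfl, rfl⟩ := normalForm_injective hn
        (congrArg Subtype.val (congrArg Subtype.val h))
      rfl
    · rintro ⟨g, hg⟩
      obtain ⟨i, j, k, h⟩ := exists_normalForm (by omega) hza hzb hba
        (Subtype.ext alphaM_pow_self) (Subtype.ext (betaM_pow_self hn)) hz hg
      exact ⟨(i, j, k), Subtype.ext h.symm⟩
  refine ⟨Finite.of_surjective F hF.2, ?_⟩
  rw [← Nat.card_eq_of_bijective F hF]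
  simp only [Nat.card_prod, Nat.card_fin]
  ring
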